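/- arXiv:math/0312141 — 3 statements merged into one kernel-verified Lean document; each statement's English description precedes it below -/
import Mathlib

section
/- Let I = (a, b) be an open real interval, let y : ℝ → ℝ be continuous on I, and let α > 0 and β ≥ 0 be real constants. Assume that y satisfies the differential inequality y' + α y ≤ β in the sense of distributions on I, i.e. for every nonnegative smooth compactly supported function φ : ℝ → ℝ with support contained in I one has ∫ (−y(t) φ'(t) + α y(t) φ(t)) dt ≤ β ∫ φ(t) dt. Then for all s, t ∈ I with s ≤ t, y(t) ≤ y(s) e^{−α(t−s)} + (β/α)(1 − e^{−α(t−s)}). -/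
open MeasureTheory Set Real

/-!
Multiplying `y' + α y ≤ β` by the smooth integrating factor `e^{αx}` gives
`(e^{αx} y)' ≤ β e^{αx}` in the sense of distributions, and subtracting a primitive of the right
side leaves a continuous function `z` with `z' ≤ 0`. Such a `z` is antitone: for a bump kernel `η`,
the function `x ↦ ∫ u in (x - t)..(x - s), η u` is a nonnegative test function with derivative
`η (x - s) - η (x - t)`, so the `η`-average of `z` around `t` is at most the one around `s`; let the
support of `η` shrink to `0`.
-/

open Filter Function TopologicalSpace
open scoped Distributions Topology ContDiff

section Averages

variable {X : Type*} [MeasurableSpace X] {μ : Measure X}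

lemma integrable_mul_of_tsupport_subset [TopologicalSpace X] [T2Space X] [OpensMeasurableSpace X]
    [IsFiniteMeasureOnCompacts μ] {U : Set X} {f g : X → ℝ} (hf : ContinuousOn f U)
    (hg : Continuous g) (hgc : HasCompactSupport g) (hgU : tsupport g ⊆ U) :
    Integrable (fun x => f x * g x) μ := by
  have hK : IntegrableOn (fun x => f x * g x) (tsupport g) μ :=
    ((hf.mono hgU).mul hg.continuousOn).integrableOn_compact hgc
  exact (integrableOn_iff_integrable_of_support_subset
    ((support_mul_subset_right f g).trans (subset_tsupport g))).1 hK

lemma integral_mul_mem_Icc {z η : X → ℝ} {c d : ℝ} (hη : ∀ x, 0 ≤ η x) (hη_one : ∫ x, η x ∂μ = 1)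
    (hzη : Integrable (fun x => z x * η x) μ) (hz : ∀ x ∈ support η, z x ∈ Icc c d) :
    ∫ x, z x * η x ∂μ ∈ Icc c d := by
  have hηi : Integrable η μ := integrable_of_integral_eq_one hη_one
  have integral_const_mul_η (k : ℝ) : ∫ x, k * η x ∂μ = k := by
    rw [integral_const_mul, hη_one, mul_one]
  have pointwise (x : X) : c * η x ≤ z x * η x ∧ z x * η x ≤ d * η x := by
    rcases eq_or_ne (η x) 0 with h0 | h0
    · simp [h0]
    · exact ⟨mul_le_mul_of_nonneg_right (hz x h0).1 (hη x),
        mul_le_mul_of_nonneg_right (hz x h0).2 (hη x)⟩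
  constructor
  · rw [← integral_const_mul_η c]
    exact integral_mono (hηi.const_mul c) hzη fun x => (pointwise x).1
  · rw [← integral_const_mul_η d]
    exact integral_mono hzη (hηi.const_mul d) fun x => (pointwise x).2

end Averages

section TranslatedKernel

variable {z η : ℝ → ℝ} {r δ : ℝ}

lemma support_comp_sub_subset_Icc (hη_supp : support η ⊆ Icc (-δ) δ) (r : ℝ) :
    support (fun x => η (x - r)) ⊆ Icc (r - δ) (r + δ) := fun _ hx =>
  ⟨by linarith [(hη_supp hx).1], by linarith [(hη_supp hx).2]⟩

lemma integrable_mul_comp_sub (hz : ContinuousOn z (Icc (r - δ) (r + δ))) (hη : Continuous η)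
    (hη_supp : support η ⊆ Icc (-δ) δ) : Integrable (fun x => z x * η (x - r)) := by
  have htsupp : tsupport (fun x => η (x - r)) ⊆ Icc (r - δ) (r + δ) :=
    closure_minimal (support_comp_sub_subset_Icc hη_supp r) isClosed_Icc
  exact integrable_mul_of_tsupport_subset hz (by fun_prop)
    (isCompact_Icc.of_isClosed_subset (isClosed_tsupport _) htsupp) htsupp

lemma integral_mul_comp_sub_mem_Icc {c d : ℝ} (hz : ContinuousOn z (Icc (r - δ) (r + δ)))
    (hη : Continuous η) (hη_nonneg : ∀ x, 0 ≤ η x) (hη_one : ∫ x, η x = 1)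
    (hη_supp : support η ⊆ Icc (-δ) δ) (hzcd : ∀ x ∈ Icc (r - δ) (r + δ), z x ∈ Icc c d) :
    ∫ x, z x * η (x - r) ∈ Icc c d :=
  integral_mul_mem_Icc (fun x => hη_nonneg (x - r)) (by rw [integral_sub_right_eq_self η r, hη_one])
    (integrable_mul_comp_sub hz hη hη_supp) fun x hx =>
      hzcd x (support_comp_sub_subset_Icc hη_supp r hx)

end TranslatedKernel

/-- The convolution of a kernel `η` with the indicator function of `[s, t]` (for `s ≤ t`), written
as an integral of `η` so that smoothness and the derivative can be read off. For a bump `η` it is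
the test function that compares averages around `s` and `t`. -/
noncomputable def mollifiedIndicator (η : ℝ → ℝ) (s t x : ℝ) : ℝ :=
  ∫ u in (x - t)..(x - s), η u

namespace mollifiedIndicator

variable {η : ℝ → ℝ} {s t δ : ℝ}

lemma nonneg (hη : ∀ x, 0 ≤ η x) (hst : s ≤ t) (x : ℝ) : 0 ≤ mollifiedIndicator η s t x :=
  intervalIntegral.integral_nonneg (by linarith) fun u _ => hη u

lemma hasDerivAt (hη : Continuous η) (s t x : ℝ) :
    HasDerivAt (mollifiedIndicator η s t) (η (x - s) - η (x - t)) x := by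
  have primitive (r : ℝ) : HasDerivAt (fun x => ∫ u in (0 : ℝ)..(x - r), η u) (η (x - r)) x :=
    (hη.integral_hasStrictDerivAt 0 (x - r)).hasDerivAt.comp_sub_const x r
  have split : mollifiedIndicator η s t =
      fun x => (∫ u in (0 : ℝ)..(x - s), η u) - ∫ u in (0 : ℝ)..(x - t), η u :=
    funext fun x => (intervalIntegral.integral_interval_sub_left
      (hη.intervalIntegrable _ _) (hη.intervalIntegrable _ _)).symm
  rw [split]
  exact (primitive s).sub (primitive t)

lemma deriv_eq (hη : Continuous η) (s t : ℝ) :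
    deriv (mollifiedIndicator η s t) = fun x => η (x - s) - η (x - t) :=
  funext fun x => (hasDerivAt hη s t x).deriv

lemma contDiff (hη : ContDiff ℝ ∞ η) (s t : ℝ) : ContDiff ℝ ∞ (mollifiedIndicator η s t) := by
  refine contDiff_infty_iff_deriv.2
    ⟨fun x => (hasDerivAt hη.continuous s t x).differentiableAt, ?_⟩
  rw [deriv_eq hη.continuous]
  fun_prop

lemma tsupport_subset (hη : support η ⊆ Icc (-δ) δ) (hst : s ≤ t) :
    tsupport (mollifiedIndicator η s t) ⊆ Icc (s - δ) (t + δ) := by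
  refine closure_minimal (fun x => ?_) isClosed_Icc
  contrapose!
  intro hx
  have η_eq_zero : ∀ u ∈ uIcc (x - t) (x - s), η u = 0 := by
    intro u hu
    rw [uIcc_of_le (by linarith), mem_Icc] at hu
    by_contra hηu
    obtain ⟨hu₁, hu₂⟩ := hη hηu
    exact hx ⟨by linarith, by linarith⟩
  rw [notMem_support, mollifiedIndicator, intervalIntegral.integral_congr η_eq_zero,
    intervalIntegral.integral_zero]

end mollifiedIndicator

/-- The differential inequality `z' ≤ g` in the sense of distributions on the open set `Ω`. It is
meant for `z` and `g` locally integrable on `Ω`; otherwise the integrals may take the junk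
value `0`. -/
def DistribDerivLE (Ω : Opens ℝ) (z g : ℝ → ℝ) : Prop :=
  ∀ φ : 𝓓(Ω, ℝ), (∀ x, 0 ≤ φ x) → -∫ x, z x * deriv φ x ≤ ∫ x, g x * φ x

section TestFunctions

variable {Ω : Opens ℝ} {f : ℝ → ℝ}

lemma integrable_mul_testFunction (hf : ContinuousOn f Ω) (φ : 𝓓(Ω, ℝ)) :
    Integrable (fun x => f x * φ x) :=
  integrable_mul_of_tsupport_subset hf φ.continuous φ.hasCompactSupport φ.tsupport_subset

lemma integrable_mul_deriv_testFunction (hf : ContinuousOn f Ω) (φ : 𝓓(Ω, ℝ)) :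
    Integrable (fun x => f x * deriv φ x) :=
  integrable_mul_of_tsupport_subset hf (φ.contDiff.continuous_deriv (by simp))
    φ.hasCompactSupport.deriv (tsupport_deriv_subset.trans φ.tsupport_subset)

lemma integral_mul_deriv_testFunction {f' : ℝ → ℝ} (hf : ∀ x ∈ Ω, HasDerivAt f (f' x) x)
    (hf' : ContinuousOn f' Ω) (φ : 𝓓(Ω, ℝ)) :
    ∫ x, f x * deriv φ x = -∫ x, f' x * φ x := by
  have hfc : ContinuousOn f Ω := fun x hx => (hf x hx).continuousAt.continuousWithinAt
  exact integral_mul_deriv_eq_deriv_mul_of_integrable (fun x hx => hf x (φ.tsupport_subset hx))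
    (fun x _ => (φ.contDiff.differentiable (by simp) x).hasDerivAt)
    (integrable_mul_deriv_testFunction hfc φ) (integrable_mul_testFunction hf' φ)
    (integrable_mul_testFunction hfc φ)

end TestFunctions

namespace DistribDerivLE

variable {Ω : Opens ℝ} {z g : ℝ → ℝ}

lemma mul_left {w : ℝ → ℝ} (hw : ContDiff ℝ ∞ w) (hw_nonneg : ∀ x, 0 ≤ w x)
    (hz : ContinuousOn z Ω) (hg : ContinuousOn g Ω) (h : DistribDerivLE Ω z g) :
    DistribDerivLE Ω (fun x => w x * z x) (fun x => deriv w x * z x + w x * g x) := by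
  intro φ hφ
  let wφ : 𝓓(Ω, ℝ) := ⟨fun x => w x * φ x, hw.mul φ.contDiff, φ.hasCompactSupport.mul_left,
    tsupport_mul_subset_right.trans φ.tsupport_subset⟩
  have deriv_wφ (x : ℝ) : deriv wφ x = deriv w x * φ x + w x * deriv φ x :=
    ((hw.differentiable (by simp) x).hasDerivAt.mul
      (φ.contDiff.differentiable (by simp) x).hasDerivAt).deriv
  have hw'z : Integrable (fun x => deriv w x * z x * φ x) :=
    integrable_mul_testFunction ((hw.continuous_deriv (by simp)).continuousOn.mul hz) φ
  calc -∫ x, w x * z x * deriv φ x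
      = -∫ x, (z x * deriv wφ x - deriv w x * z x * φ x) := by
        congr! 3 with x
        rw [deriv_wφ]
        ring
    _ = -(∫ x, z x * deriv wφ x) + ∫ x, deriv w x * z x * φ x := by
        rw [integral_sub (integrable_mul_deriv_testFunction hz wφ) hw'z]
        ring
    _ ≤ (∫ x, g x * wφ x) + ∫ x, deriv w x * z x * φ x := by
        gcongr
        exact h wφ fun x => mul_nonneg (hw_nonneg x) (hφ x)
    _ = ∫ x, (deriv w x * z x + w x * g x) * φ x := by
        rw [← integral_add (integrable_mul_testFunction hg wφ) hw'z]
        congr! 2 with x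
        change g x * (w x * φ x) + _ = _
        ring

lemma sub_primitive {G : ℝ → ℝ} (hz : ContinuousOn z Ω) (hG : ∀ x ∈ Ω, HasDerivAt G (g x) x)
    (hg : ContinuousOn g Ω) (h : DistribDerivLE Ω z g) :
    DistribDerivLE Ω (fun x => z x - G x) 0 := by
  intro φ hφ
  have hGc : ContinuousOn G Ω := fun x hx => (hG x hx).continuousAt.continuousWithinAt
  simp only [sub_mul, Pi.zero_apply, zero_mul, integral_zero]
  rw [integral_sub (integrable_mul_deriv_testFunction hz φ)
    (integrable_mul_deriv_testFunction hGc φ), integral_mul_deriv_testFunction hG hg]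
  linarith [h φ hφ]

lemma integral_mul_comp_sub_le {η : ℝ → ℝ} {s t δ : ℝ} (hη : ContDiff ℝ ∞ η)
    (hη_nonneg : ∀ x, 0 ≤ η x) (hη_supp : support η ⊆ Icc (-δ) δ) (hst : s ≤ t)
    (hΩ : Icc (s - δ) (t + δ) ⊆ Ω) (hz : ContinuousOn z Ω) (h : DistribDerivLE Ω z 0) :
    ∫ x, z x * η (x - t) ≤ ∫ x, z x * η (x - s) := by
  have htsupp : tsupport (mollifiedIndicator η s t) ⊆ Icc (s - δ) (t + δ) :=
    mollifiedIndicator.tsupport_subset hη_supp hst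
  have hcompact : HasCompactSupport (mollifiedIndicator η s t) :=
    isCompact_Icc.of_isClosed_subset (isClosed_tsupport _) htsupp
  let φ : 𝓓(Ω, ℝ) :=
    ⟨mollifiedIndicator η s t, mollifiedIndicator.contDiff hη s t, hcompact, htsupp.trans hΩ⟩
  have deriv_φ : deriv φ = fun x => η (x - s) - η (x - t) :=
    mollifiedIndicator.deriv_eq hη.continuous s t
  have hzs : Integrable (fun x => z x * η (x - s)) :=
    integrable_mul_comp_sub (hz.mono ((Icc_subset_Icc_right (by linarith)).trans hΩ))
      hη.continuous hη_supp
  have hzt : Integrable (fun x => z x * η (x - t)) :=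
    integrable_mul_comp_sub (hz.mono ((Icc_subset_Icc_left (by linarith)).trans hΩ))
      hη.continuous hη_supp
  have test := h φ (mollifiedIndicator.nonneg hη_nonneg hst)
  simp only [deriv_φ, mul_sub, Pi.zero_apply, zero_mul, integral_zero] at test
  rw [integral_sub hzs hzt] at test
  linarith

lemma antitoneOn (hΩ : (Ω : Set ℝ).OrdConnected) (hz : ContinuousOn z Ω)
    (h : DistribDerivLE Ω z 0) : AntitoneOn z Ω := by
  intro s hs t ht hst
  refine le_of_forall_pos_le_add fun ε hε => ?_
  have near (r : ℝ) (hr : r ∈ Ω) : ∀ᶠ δ in 𝓝[>] (0 : ℝ), Icc (r - δ) (r + δ) ⊆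
      Ω ∩ z ⁻¹' Icc (z r - ε / 2) (z r + ε / 2) := by
    have hΩr : (Ω : Set ℝ) ∈ 𝓝 r := Ω.isOpen.mem_nhds hr
    have hzr : z ⁻¹' Icc (z r - ε / 2) (z r + ε / 2) ∈ 𝓝 r :=
      (hz.continuousAt hΩr).preimage_mem_nhds (Icc_mem_nhds (by linarith) (by linarith))
    simp only [← Real.closedBall_eq_Icc (x := r)]
    exact nhdsWithin_le_nhds (eventually_closedBall_subset (inter_mem hΩr hzr))
  obtain ⟨δ, ⟨hδs, hδt⟩, hδ : 0 < δ⟩ :=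
    (((near s hs).and (near t ht)).and self_mem_nhdsWithin).exists
  have hΩδ : Icc (s - δ) (t + δ) ⊆ Ω :=
    hΩ.out (hδs ⟨le_rfl, by linarith⟩).1 (hδt ⟨by linarith, le_rfl⟩).1
  let bump : ContDiffBump (0 : ℝ) := ⟨δ / 2, δ, by positivity, by linarith⟩
  let η : ℝ → ℝ := bump.normed volume
  have hη_supp : support η ⊆ Icc (-δ) δ := by
    rw [bump.support_normed_eq, Real.ball_eq_Ioo, zero_sub, zero_add]
    exact Ioo_subset_Icc_self
  have average (r : ℝ) (hr : Icc (r - δ) (r + δ) ⊆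
      Ω ∩ z ⁻¹' Icc (z r - ε / 2) (z r + ε / 2)) :
      ∫ x, z x * η (x - r) ∈ Icc (z r - ε / 2) (z r + ε / 2) :=
    integral_mul_comp_sub_mem_Icc (hz.mono fun x hx => (hr hx).1) bump.continuous_normed
      bump.nonneg_normed bump.integral_normed hη_supp fun x hx => (hr hx).2
  have compare : ∫ x, z x * η (x - t) ≤ ∫ x, z x * η (x - s) :=
    h.integral_mul_comp_sub_le bump.contDiff_normed bump.nonneg_normed hη_supp hst hΩδ hz
  linarith [(average t hδt).1, (average s hδs).2]

lemma sub_le_integral (hΩ : (Ω : Set ℝ).OrdConnected) (hz : ContinuousOn z Ω)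
    (hg : ContinuousOn g Ω) (h : DistribDerivLE Ω z g) {s t : ℝ} (hs : s ∈ Ω) (ht : t ∈ Ω)
    (hst : s ≤ t) : z t - z s ≤ ∫ x in s..t, g x := by
  have hasDerivAt_primitive : ∀ x ∈ Ω, HasDerivAt (fun x => ∫ u in s..x, g u) (g x) x :=
    fun x hx => intervalIntegral.integral_hasDerivAt_right
      (hg.mono (hΩ.uIcc_subset hs hx)).intervalIntegrable
      (hg.stronglyMeasurableAtFilter Ω.isOpen x hx) (hg.continuousAt (Ω.isOpen.mem_nhds hx))
  have primitive_continuousOn : ContinuousOn (fun x => ∫ u in s..x, g u) Ω :=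
    fun x hx => (hasDerivAt_primitive x hx).continuousAt.continuousWithinAt
  have anti : z t - ∫ x in s..t, g x ≤ z s - ∫ x in s..s, g x :=
    (h.sub_primitive hz hasDerivAt_primitive hg).antitoneOn hΩ (hz.sub primitive_continuousOn)
      hs ht hst
  rw [intervalIntegral.integral_same] at anti
  linarith

lemma exp_mul_left {y : ℝ → ℝ} {α β : ℝ} (hy : ContinuousOn y Ω)
    (h : DistribDerivLE Ω y fun x => β - α * y x) :
    DistribDerivLE Ω (fun x => exp (α * x) * y x) (fun x => β * exp (α * x)) := by
  have deriv_exp_mul (x : ℝ) : deriv (fun x => exp (α * x)) x = exp (α * x) * α := by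
    simpa using ((hasDerivAt_id x).const_mul α).exp.deriv
  have weighted := h.mul_left (w := fun x => exp (α * x)) (by fun_prop) (fun x => (exp_pos _).le)
    hy (by fun_prop)
  convert weighted using 2 with x
  rw [deriv_exp_mul]
  ring

end DistribDerivLE

lemma distribDerivLE_sub_mul_of_integral_le {Ω : Opens ℝ} {y : ℝ → ℝ} {α β : ℝ}
    (hy : ContinuousOn y Ω)
    (hineq : ∀ φ : 𝓓(Ω, ℝ), (∀ t, 0 ≤ φ t) →
      ∫ t, (-(y t) * deriv φ t + α * y t * φ t) ≤ β * ∫ t, φ t) :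
    DistribDerivLE Ω y fun x => β - α * y x := by
  intro φ hφ
  have hy' : Integrable (fun x => -(y x) * deriv φ x) :=
    integrable_mul_deriv_testFunction hy.neg φ
  have hαy : Integrable (fun x => α * y x * φ x) :=
    integrable_mul_testFunction (hy.const_smul α) φ
  have hβ : Integrable (fun x => β * φ x) :=
    integrable_mul_testFunction continuousOn_const φ
  calc -∫ x, y x * deriv φ x
      = (∫ x, (-(y x) * deriv φ x + α * y x * φ x)) - ∫ x, α * y x * φ x := by
        rw [integral_add hy' hαy, add_sub_cancel_right, ← integral_neg]
        simp only [neg_mul]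
    _ ≤ (∫ x, β * φ x) - ∫ x, α * y x * φ x := by
        rw [integral_const_mul]
        gcongr
        exact hineq φ hφ
    _ = ∫ x, (β - α * y x) * φ x := by
        rw [← integral_sub hβ hαy]
        simp only [sub_mul]

lemma integral_exp_neg_mul_sub {α : ℝ} (hα : α ≠ 0) (s t : ℝ) :
    ∫ r in s..t, exp (-(α * (t - r))) = (1 - exp (-(α * (t - s)))) / α := by
  simp only [← mul_neg, neg_sub]
  simp only [mul_sub]
  rw [intervalIntegral.integral_comp_mul_sub _ hα, integral_exp, sub_self, exp_zero, smul_eq_mul,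
    inv_mul_eq_div]

theorem gronwall_distributional_general {Ω : Opens ℝ} (hΩ : (Ω : Set ℝ).OrdConnected)
    {y : ℝ → ℝ} {α β : ℝ} (hy : ContinuousOn y Ω)
    (hineq : ∀ φ : 𝓓(Ω, ℝ), (∀ t, 0 ≤ φ t) →
      ∫ t, (-(y t) * deriv φ t + α * y t * φ t) ≤ β * ∫ t, φ t)
    {s t : ℝ} (hs : s ∈ Ω) (ht : t ∈ Ω) (hst : s ≤ t) :
    y t ≤ y s * exp (-(α * (t - s))) + β * ∫ r in s..t, exp (-(α * (t - r))) := by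
  have increment : exp (α * t) * y t - exp (α * s) * y s ≤ ∫ r in s..t, β * exp (α * r) :=
    ((distribDerivLE_sub_mul_of_integral_le hy hineq).exp_mul_left hy).sub_le_integral hΩ
      (by fun_prop) (by fun_prop) hs ht hst
  have exp_split (r : ℝ) : exp (-(α * (t - r))) = exp (-(α * t)) * exp (α * r) := by
    rw [← exp_add]
    ring_nf
  calc y t = exp (-(α * t)) * (exp (α * t) * y t) := by
        rw [← mul_assoc, ← exp_add, neg_add_cancel, exp_zero, one_mul]
    _ ≤ exp (-(α * t)) * (exp (α * s) * y s + ∫ r in s..t, β * exp (α * r)) := by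
        gcongr
        linarith
    _ = y s * exp (-(α * (t - s))) + β * ∫ r in s..t, exp (-(α * (t - r))) := by
        simp only [exp_split, intervalIntegral.integral_const_mul]
        ring

/-- Gronwall-type inequality from a differential inequality `y' + α y ≤ β`
holding in the sense of distributions on the open interval `(a, b)`. -/
theorem gronwall_distributional
    (a b : ℝ) (y : ℝ → ℝ) (α β : ℝ)
    (hy : ContinuousOn y (Ioo a b))
    (hα : 0 < α) (hβ : 0 ≤ β)
    (hineq : ∀ φ : ℝ → ℝ, ContDiff ℝ (⊤ : ℕ∞) φ → HasCompactSupport φ →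
      (∀ t, 0 ≤ φ t) → tsupport φ ⊆ Ioo a b →
      ∫ t, (-(y t) * deriv φ t + α * y t * φ t) ≤ β * ∫ t, φ t) :
    ∀ s ∈ Ioo a b, ∀ t ∈ Ioo a b, s ≤ t →
      y t ≤ y s * Real.exp (-(α * (t - s)))
        + (β / α) * (1 - Real.exp (-(α * (t - s)))) := by
  intro s hs t ht hst
  rw [div_mul_eq_mul_div, mul_div_assoc, ← integral_exp_neg_mul_sub hα.ne']
  exact gronwall_distributional_general (Ω := ⟨Ioo a b, isOpen_Ioo⟩) ordConnected_Ioo hy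
    (fun φ hφ => hineq φ φ.contDiff φ.hasCompactSupport hφ φ.tsupport_subset) hs ht hst
end

section
/- Let H be a separable real Hilbert space, let t₀ ∈ ℝ, and let u : ℝ → H be a function with sup_{t > t₀} ‖u(t)‖ < ∞. Then ω_w(u) attracts u in the weak topology: for every set O ⊆ H that is open in the weak topology of H and contains ω_w(u), there exists T > t₀ such that u(t) ∈ O for all t ≥ T. -/
open Filter Topology Set

/-- The weak ω-limit set of `u : ℝ → H` relative to the initial time `t₀`. -/
def weakOmegaLimit {H : Type*} [NormedAddCommGroup H] [InnerProductSpace ℝ H]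
    (t₀ : ℝ) (u : ℝ → H) : Set H :=
  {v | ∃ t : ℕ → ℝ, (∀ n, t₀ < t n) ∧ Tendsto t atTop atTop ∧
    ∀ f : H →L[ℝ] ℝ, Tendsto (fun n => f (u (t n))) atTop (𝓝 (f v))}

/-!
Closed balls of a Hilbert space are weakly sequentially compact: any sequence lies in a separable
closed subspace, where the Riesz isometry reduces the claim to the sequential Banach–Alaoglu
theorem. If a bounded trajectory were outside a weakly open `O` at arbitrarily late times, it would
converge weakly along some sequence of such times; the limit would lie in the ω-limit set, and also
in the weakly closed complement of `O`.
-/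

section SeqCompact

variable {X : Type*} [TopologicalSpace X]

theorem isSeqCompact_inter_of_isSeqClosed {K F : Set X} (hK : IsSeqCompact K)
    (hF : IsSeqClosed F) : IsSeqCompact (K ∩ F) := by
  intro x hx
  obtain ⟨a, haK, φ, hφ, hlim⟩ := hK fun n => (hx n).1
  exact ⟨a, ⟨haK, hF (fun n => (hx (φ n)).2) hlim⟩, φ, hφ, hlim⟩

theorem exists_seq_tendsto_of_frequently_mem_isSeqCompact {ι : Type*} {l : Filter ι}
    [l.IsCountablyGenerated] {K : Set X} (hK : IsSeqCompact K) {u : ι → X}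
    (hu : ∃ᶠ i in l, u i ∈ K) :
    ∃ x ∈ K, ∃ s : ℕ → ι, Tendsto s atTop l ∧ Tendsto (fun n => u (s n)) atTop (𝓝 x) := by
  obtain ⟨s, hs, hsK⟩ := exists_seq_forall_of_frequently hu
  obtain ⟨x, hxK, φ, hφ, hlim⟩ := hK hsK
  exact ⟨x, hxK, s ∘ φ, hs.comp hφ.tendsto_atTop, hlim⟩

end SeqCompact

theorem tendsto_toWeakSpace_iff {ι 𝕜 E : Type*} [CommSemiring 𝕜] [TopologicalSpace 𝕜]
    [ContinuousAdd 𝕜] [ContinuousConstSMul 𝕜 𝕜] [AddCommMonoid E] [Module 𝕜 E]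
    [TopologicalSpace E] {l : Filter ι} {u : ι → E} {x : E} :
    Tendsto (fun i => toWeakSpace 𝕜 E (u i)) l (𝓝 (toWeakSpace 𝕜 E x)) ↔
      ∀ f : StrongDual 𝕜 E, Tendsto (fun i => f (u i)) l (𝓝 (f x)) := by
  have hind : IsInducing fun (y : WeakSpace 𝕜 E) (f : StrongDual 𝕜 E) =>
      f ((toWeakSpace 𝕜 E).symm y) := ⟨rfl⟩
  rw [hind.tendsto_nhds_iff, tendsto_pi_nhds]
  rfl

section Hilbert

variable {𝕜 H : Type*} [RCLike 𝕜] [NormedAddCommGroup H] [InnerProductSpace 𝕜 H]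
  [CompleteSpace H]

theorem continuous_toWeakSpace_toDual_symm :
    Continuous fun w : WeakDual 𝕜 H =>
      toWeakSpace 𝕜 H ((InnerProductSpace.toDual 𝕜 H).symm (WeakDual.toStrongDual w)) := by
  refine continuous_iff_continuousAt.2 fun w => tendsto_toWeakSpace_iff.2 fun f => ?_
  have apply_riesz (w : WeakDual 𝕜 H) :
      f ((InnerProductSpace.toDual 𝕜 H).symm (WeakDual.toStrongDual w)) =
        star (w ((InnerProductSpace.toDual 𝕜 H).symm f)) := by
    rw [← InnerProductSpace.toDual_symm_apply (y := f), ← inner_conj_symm,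
      InnerProductSpace.toDual_symm_apply, WeakDual.toStrongDual_apply, RCLike.star_def]
  simp only [apply_riesz]
  exact (WeakDual.eval_continuous _).star.tendsto w

theorem isSeqCompact_weakSpace_closedBall_of_separableSpace [TopologicalSpace.SeparableSpace H]
    (x : H) (r : ℝ) :
    IsSeqCompact ((toWeakSpace 𝕜 H).symm ⁻¹' Metric.closedBall x r) := by
  let J := InnerProductSpace.toDual 𝕜 H
  convert (WeakDual.isSeqCompact_closedBall 𝕜 H (J x) r).image
    continuous_toWeakSpace_toDual_symm.seqContinuous
  ext y
  constructor
  · intro hy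
    refine ⟨StrongDual.toWeakDual (J ((toWeakSpace 𝕜 H).symm y)), ?_, ?_⟩
    · simpa using hy
    · simp [J]
  · rintro ⟨w, hw, rfl⟩
    simpa [J, ← J.dist_map] using hw

theorem isSeqCompact_weakSpace_closedBall (x : H) (r : ℝ) :
    IsSeqCompact ((toWeakSpace 𝕜 H).symm ⁻¹' Metric.closedBall x r) := by
  intro y hy
  let S : Set H := insert x (range fun n => (toWeakSpace 𝕜 H).symm (y n))
  let K : Submodule 𝕜 H := (Submodule.span 𝕜 S).topologicalClosure
  have hSK : S ⊆ K := Submodule.subset_span.trans (Submodule.le_topologicalClosure _)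
  have : TopologicalSpace.SeparableSpace K :=
    ((countable_range _).insert x).isSeparable.span.closure.separableSpace
  have : CompleteSpace K := (Submodule.isClosed_topologicalClosure _).completeSpace_coe
  let xK : K := ⟨x, hSK (mem_insert _ _)⟩
  let yK (n : ℕ) : K := ⟨(toWeakSpace 𝕜 H).symm (y n), hSK (mem_insert_of_mem _ ⟨n, rfl⟩)⟩
  have hyK (n : ℕ) : toWeakSpace 𝕜 K (yK n) ∈
      (toWeakSpace 𝕜 K).symm ⁻¹' Metric.closedBall xK r := hy n
  obtain ⟨a, ha, φ, hφ, hlim⟩ := isSeqCompact_weakSpace_closedBall_of_separableSpace xK r hyK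
  let incl : WeakSpace 𝕜 K →L[𝕜] WeakSpace 𝕜 H := WeakSpace.map K.subtypeL
  exact ⟨incl a, ha, φ, hφ, (incl.continuous.tendsto a).comp hlim⟩

end Hilbert

theorem mem_weakOmegaLimit_iff_exists_seq_tendsto {H : Type*} [NormedAddCommGroup H]
    [InnerProductSpace ℝ H] {t₀ : ℝ} {u : ℝ → H} {v : H} :
    v ∈ weakOmegaLimit t₀ u ↔ ∃ t : ℕ → ℝ, Tendsto t atTop atTop ∧
      Tendsto (fun n => toWeakSpace ℝ H (u (t n))) atTop (𝓝 (toWeakSpace ℝ H v)) := by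
  simp only [tendsto_toWeakSpace_iff]
  constructor
  · rintro ⟨t, -, ht, hlim⟩
    exact ⟨t, ht, hlim⟩
  · rintro ⟨t, ht, hlim⟩
    obtain ⟨N, hN⟩ := eventually_atTop.1 (ht.eventually_gt_atTop t₀)
    have hshift : Tendsto (fun n => n + N) atTop atTop := tendsto_add_atTop_nat N
    exact ⟨fun n => t (n + N), fun n => hN _ (Nat.le_add_left N n), ht.comp hshift,
      fun f => (hlim f).comp hshift⟩

theorem weakOmegaLimit_attracts_weakly_general
    {H : Type*} [NormedAddCommGroup H] [InnerProductSpace ℝ H] [CompleteSpace H]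
    {t₀ : ℝ} {u : ℝ → H} (hu : IsBoundedUnder (· ≤ ·) atTop fun t => ‖u t‖)
    {O : Set (WeakSpace ℝ H)} (hO : IsOpen O)
    (hsub : toWeakSpace ℝ H '' weakOmegaLimit t₀ u ⊆ O) :
    ∀ᶠ t in atTop, toWeakSpace ℝ H (u t) ∈ O := by
  by_contra hfreq
  obtain ⟨R, hR⟩ := hu
  let B : Set (WeakSpace ℝ H) := (toWeakSpace ℝ H).symm ⁻¹' Metric.closedBall 0 R
  have hB : ∀ᶠ t in atTop, toWeakSpace ℝ H (u t) ∈ B := by simpa [B] using hR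
  have hBO : IsSeqCompact (B ∩ Oᶜ) :=
    isSeqCompact_inter_of_isSeqClosed (isSeqCompact_weakSpace_closedBall 0 R)
      hO.isClosed_compl.isSeqClosed
  obtain ⟨v, hv, t, ht, hlim⟩ := exists_seq_tendsto_of_frequently_mem_isSeqCompact hBO
    (hB.and_frequently (not_eventually.1 hfreq))
  have hvω : (toWeakSpace ℝ H).symm v ∈ weakOmegaLimit t₀ u :=
    mem_weakOmegaLimit_iff_exists_seq_tendsto.2 ⟨t, ht, hlim⟩
  exact hv.2 (hsub ⟨_, hvω, rfl⟩)

/-- The weak ω-limit set attracts `u` in the weak topology: every weakly open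
set containing it contains `u t` for all sufficiently large `t`. -/
theorem weakOmegaLimit_attracts_weakly
    {H : Type*} [NormedAddCommGroup H] [InnerProductSpace ℝ H]
    [CompleteSpace H] [TopologicalSpace.SeparableSpace H]
    (t₀ : ℝ) (u : ℝ → H) (R : ℝ) (hbdd : ∀ t, t₀ < t → ‖u t‖ ≤ R) :
    ∀ O : Set (WeakSpace ℝ H), IsOpen O →
      (toWeakSpace ℝ H) '' (weakOmegaLimit t₀ u) ⊆ O →
      ∃ T, t₀ < T ∧ ∀ t, T ≤ t → toWeakSpace ℝ H (u t) ∈ O := fun O hO hsub =>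
  have hu : ∀ᶠ t in atTop, toWeakSpace ℝ H (u t) ∈ O :=
    weakOmegaLimit_attracts_weakly_general ⟨R, (eventually_gt_atTop t₀).mono hbdd⟩ hO hsub
  ((eventually_gt_atTop t₀).and (eventually_forall_ge_atTop.2 hu)).exists
end

section
/- Let H be a separable real Hilbert space, let t₀ ∈ ℝ, and let u : ℝ → H be a function with sup_{t > t₀} ‖u(t)‖ < ∞. Assume that for every sequence tₙ > t₀ with tₙ → ∞ and every v ∈ H such that u(tₙ) converges weakly to v, one also has ‖u(tₙ) − v‖ → 0. Then ω_w(u) attracts u in the strong topology of H: for every ε > 0 there exists T > t₀ such that for all t ≥ T there exists v ∈ ω_w(u) with ‖u(t) − v‖ < ε. -/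
open Filter Topology Set

/-!
If `u` did not converge to its weak ω-limit set, some sequence `u (tₙ)` with `tₙ → ∞` would stay
outside a neighbourhood of that set. This sequence is bounded, so it has a weakly convergent
subsequence; its weak limit lies in the ω-limit set, and by hypothesis the convergence is strong, so
the subsequence enters the neighbourhood. Weak sequential compactness comes from the sequential
Banach-Alaoglu theorem, applied in the separable closed span of the sequence, to which all
continuous functionals restrict.
-/

theorem tendsto_nhdsSet_of_seq_mapClusterPt {α X : Type*} [TopologicalSpace X]
    {l : Filter α} [l.IsCountablyGenerated] {s : Set α} (hs : s ∈ l) {u : α → X} {A : Set X}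
    (h : ∀ t : ℕ → α, (∀ n, t n ∈ s) → Tendsto t atTop l →
      ∃ a ∈ A, MapClusterPt a atTop (u ∘ t)) :
    Tendsto u l (𝓝ˢ A) := by
  intro U hU
  by_contra hescape
  have hfreq : ∃ᶠ x in l, u x ∉ U ∧ x ∈ s :=
    (not_eventually.mp hescape : ∃ᶠ x in l, u x ∉ U).and_eventually hs
  obtain ⟨t, htl, ht⟩ := exists_seq_forall_of_frequently hfreq
  obtain ⟨a, haA, hcluster⟩ := h t (fun n => (ht n).2) htl
  obtain ⟨n, hn⟩ := (hcluster.frequently (mem_nhdsSet_iff_forall.mp hU a haA)).exists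
  exact (ht n).1 hn

theorem eventually_exists_norm_sub_lt_of_tendsto_nhdsSet {α E : Type*} [SeminormedAddCommGroup E]
    {l : Filter α} {u : α → E} {A : Set E} (hu : Tendsto u l (𝓝ˢ A)) {ε : ℝ} (hε : 0 < ε) :
    ∀ᶠ x in l, ∃ a ∈ A, ‖u x - a‖ < ε := by
  simpa only [Metric.mem_thickening_iff, dist_eq_norm] using
    hu.eventually_mem (Metric.thickening_mem_nhdsSet A hε)

section WeakCompactness

variable {𝕜 E : Type*} [RCLike 𝕜] [NormedAddCommGroup E] [InnerProductSpace 𝕜 E] [CompleteSpace E]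
  {x : ℕ → E} {r : ℝ}

open TopologicalSpace InnerProductSpace

theorem exists_subseq_tendsto_weakly_of_separable [SeparableSpace E] (hx : ∀ n, ‖x n‖ ≤ r) :
    ∃ v : E, ∃ φ : ℕ → ℕ, StrictMono φ ∧
      ∀ f : StrongDual 𝕜 E, Tendsto (fun n => f (x (φ n))) atTop (𝓝 (f v)) := by
  have hball (n : ℕ) : StrongDual.toWeakDual (toDual 𝕜 E (x n)) ∈
      WeakDual.toStrongDual ⁻¹' Metric.closedBall (0 : StrongDual 𝕜 E) r :=
    mem_closedBall_zero_iff.mpr (((toDual 𝕜 E).norm_map (x n)).trans_le (hx n))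
  obtain ⟨a, -, φ, hφ, hlim⟩ := WeakDual.isSeqCompact_closedBall 𝕜 E 0 r hball
  obtain ⟨v, rfl⟩ := StrongDual.toWeakDual.surjective.comp (toDual 𝕜 E).surjective a
  refine ⟨v, φ, hφ, fun f => ?_⟩
  obtain ⟨y, rfl⟩ := (toDual 𝕜 E).surjective f
  have hinner : Tendsto (fun n => inner 𝕜 (x (φ n)) y) atTop (𝓝 (inner 𝕜 v y)) :=
    ((WeakDual.eval_continuous y).tendsto _).comp hlim
  simpa only [toDual_apply_apply, inner_conj_symm, Function.comp_def] using
    (RCLike.continuous_conj.tendsto _).comp hinner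

theorem exists_subseq_tendsto_weakly (hx : ∀ n, ‖x n‖ ≤ r) :
    ∃ v : E, ∃ φ : ℕ → ℕ, StrictMono φ ∧
      ∀ f : StrongDual 𝕜 E, Tendsto (fun n => f (x (φ n))) atTop (𝓝 (f v)) := by
  let K : Submodule 𝕜 E := (Submodule.span 𝕜 (range x)).topologicalClosure
  have hxK (n : ℕ) : x n ∈ K :=
    Submodule.le_topologicalClosure _ (Submodule.subset_span (mem_range_self n))
  have : SeparableSpace K := (countable_range x).isSeparable.span.closure.separableSpace
  have : CompleteSpace K := (Submodule.isClosed_topologicalClosure _).completeSpace_coe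
  obtain ⟨v, φ, hφ, hlim⟩ :=
    exists_subseq_tendsto_weakly_of_separable (𝕜 := 𝕜) (x := fun n => (⟨x n, hxK n⟩ : K)) hx
  exact ⟨v, φ, hφ, fun f => hlim (f.comp K.subtypeL)⟩

end WeakCompactness

theorem weakOmegaLimit_attracts_strongly_general
    {H : Type*} [NormedAddCommGroup H] [InnerProductSpace ℝ H] [CompleteSpace H]
    {t₀ R : ℝ} {u : ℝ → H} (hbdd : ∀ t, t₀ < t → ‖u t‖ ≤ R)
    (hstrong : ∀ (t : ℕ → ℝ) (v : H), (∀ n, t₀ < t n) → Tendsto t atTop atTop →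
      (∀ f : H →L[ℝ] ℝ, Tendsto (fun n => f (u (t n))) atTop (𝓝 (f v))) →
      Tendsto (fun n => ‖u (t n) - v‖) atTop (𝓝 0)) :
    Tendsto u atTop (𝓝ˢ (weakOmegaLimit t₀ u)) := by
  refine tendsto_nhdsSet_of_seq_mapClusterPt (Ioi_mem_atTop t₀) fun t ht htop => ?_
  obtain ⟨v, φ, hφ, hweak⟩ := exists_subseq_tendsto_weakly (𝕜 := ℝ) fun n => hbdd (t n) (ht n)
  have hφtop : Tendsto (t ∘ φ) atTop atTop := htop.comp hφ.tendsto_atTop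
  have hlim : Tendsto (u ∘ t ∘ φ) atTop (𝓝 v) :=
    tendsto_iff_norm_sub_tendsto_zero.mpr
      (hstrong (t ∘ φ) v (fun n => ht (φ n)) hφtop hweak)
  exact ⟨v, ⟨t ∘ φ, fun n => ht (φ n), hφtop, hweak⟩,
    hlim.mapClusterPt.of_comp hφ.tendsto_atTop⟩

/-- If every weakly convergent sequence `u (tₙ)` (with `tₙ > t₀`, `tₙ → ∞`)
converges strongly to its weak limit, then the weak ω-limit set attracts `u`
in the strong topology of `H`. -/
theorem weakOmegaLimit_attracts_strongly
    {H : Type*} [NormedAddCommGroup H] [InnerProductSpace ℝ H]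
    [CompleteSpace H] [TopologicalSpace.SeparableSpace H]
    (t₀ : ℝ) (u : ℝ → H) (R : ℝ) (hbdd : ∀ t, t₀ < t → ‖u t‖ ≤ R)
    (hstrong : ∀ (t : ℕ → ℝ) (v : H), (∀ n, t₀ < t n) → Tendsto t atTop atTop →
      (∀ f : H →L[ℝ] ℝ, Tendsto (fun n => f (u (t n))) atTop (𝓝 (f v))) →
      Tendsto (fun n => ‖u (t n) - v‖) atTop (𝓝 0)) :
    ∀ ε > 0, ∃ T, t₀ < T ∧ ∀ t, T ≤ t →
      ∃ v ∈ weakOmegaLimit t₀ u, ‖u t - v‖ < ε := by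
  intro ε hε
  obtain ⟨T, hT⟩ := eventually_atTop.mp ((eventually_gt_atTop t₀).and
    (eventually_exists_norm_sub_lt_of_tendsto_nhdsSet
      (weakOmegaLimit_attracts_strongly_general hbdd hstrong) hε))
  exact ⟨T, (hT T le_rfl).1, fun t ht => (hT t ht).2⟩
end
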